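/- Let w ∈ W̃ be an f-cycle of length n of the form w = t_1^a t_n^b z, where z is the cyclic permutation (1,2,…,n) ∈ 𝔖_n and a+b ≡ f (mod p). Then for each 0 ≤ j < p, Tr(Dτ^j w, V^{⊗n}) = h·ζ^{−(f+b)jd}·p^{(f)}_{n/h}(𝒳_j) if h divides n and h divides f (where h = h_j), and Tr(Dτ^j w, V^{⊗n}) = 0 otherwise. -/

import Mathlib

/-!
Common framework for formalizing T. Shoji, "Green functions associated to
complex reflection groups, II" (arXiv:math/0105053).

We model:
* `e`-partitions of `n` as functions `ZMod e → Multiset ℕ`;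
* the complex reflection group `W̃ = G(e,1,n)` as the semidirect product
  `(Fin n → Multiplicative (ZMod e)) ⋊ Equiv.Perm (Fin n)`, and
  `W = G(e,p,n)` as the kernel of the mod-`p` sum character;
* the tensor space `V^{⊗n}` concretely via matrices indexed by
  `Fin n → (Σ k : ZMod e, Fin (m k))`;
* symmetric functions in the (finitely many, `m k ≥ n`) variables
  `x_i^{(k)}` in evaluated form, i.e. as functions of an assignment
  `xv : (Σ k : ZMod e, Fin (m k)) → ℂ`.
-/

open scoped BigOperators

attribute [local instance] Classical.propDecidable

namespace GreenII

/-! ## Combinatorics of e-partitions -/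

/-- An `e`-partition of `n`: a tuple of partitions (multisets of positive
integers) indexed by `ZMod e`, with total size `n`. -/
def IsEPartition (e : ℕ) [NeZero e] (n : ℕ) (α : ZMod e → Multiset ℕ) : Prop :=
  (∀ k, ∀ x ∈ α k, 0 < x) ∧ (∑ k : ZMod e, (α k).sum) = n

/-- The shift operator `θ = θ_p`, `θ(α)^{(k)} = α^{(k-d)}`. -/
def theta (e : ℕ) [NeZero e] (d : ℕ) (α : ZMod e → Multiset ℕ) : ZMod e → Multiset ℕ :=
  fun k => α (k - (d : ZMod e))

/-- `c_{α,p}`: the size of the `θ`-orbit of `α`. -/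
noncomputable def csize (e : ℕ) [NeZero e] (d : ℕ) (α : ZMod e → Multiset ℕ) : ℕ :=
  Function.minimalPeriod (theta e d) α

/-- `Δ(α) = ∑_k k · l(α^{(k)})`. -/
def Delta (e : ℕ) [NeZero e] (α : ZMod e → Multiset ℕ) : ℕ :=
  ∑ k : ZMod e, k.val * (α k).card

/-- `l(α) = ∑_k l(α^{(k)})`, the total number of parts. -/
def lenE (e : ℕ) [NeZero e] (α : ZMod e → Multiset ℕ) : ℕ :=
  ∑ k : ZMod e, (α k).card

/-- `α` and `β` lie in the same `θ`-orbit. -/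
def SameOrbit (e : ℕ) [NeZero e] (d : ℕ) (α β : ZMod e → Multiset ℕ) : Prop :=
  ∃ i, (theta e d)^[i] α = β

/-! ## The groups `W̃ = G(e,1,n)` and `W = G(e,p,n)` -/

/-- The "diagonal" part of `G(e,1,n)`. -/
abbrev NC (e n : ℕ) := Fin n → Multiplicative (ZMod e)

/-- The permutation action of `𝔖_n` on the diagonal part. -/
def permAut (e n : ℕ) (x : Equiv.Perm (Fin n)) : NC e n ≃* NC e n where
  toFun f := f ∘ ⇑x.symm
  invFun f := f ∘ ⇑x
  left_inv f := by funext i; simp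
  right_inv f := by funext i; simp
  map_mul' f g := rfl

def permHom (e n : ℕ) : Equiv.Perm (Fin n) →* MulAut (NC e n) where
  toFun x := permAut e n x
  map_one' := rfl
  map_mul' x y := rfl

/-- `W̃ = G(e,1,n) ≅ (ℤ/eℤ)^n ⋊ 𝔖_n`, with `w = x(a_1,…,a_n)` recorded as
`⟨(a_i), x⟩`. -/
abbrev Wt (e n : ℕ) := NC e n ⋊[permHom e n] Equiv.Perm (Fin n)

noncomputable instance WtFintype (e n : ℕ) [NeZero e] : Fintype (Wt e n) :=
  Fintype.ofEquiv (NC e n × Equiv.Perm (Fin n))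
    { toFun := fun x => ⟨x.1, x.2⟩
      invFun := fun x => (x.left, x.right)
      left_inv := fun _ => rfl
      right_inv := fun _ => rfl }

/-- The character `w ↦ ∑ a_i mod p` of `W̃`. -/
noncomputable def wsumHom (e p n : ℕ) (hp : p ∣ e) : Wt e n →* Multiplicative (ZMod p) where
  toFun w := Multiplicative.ofAdd (∑ i, ZMod.castHom hp (ZMod p) (w.left i).toAdd)
  map_one' := by simp
  map_mul' w w' := by
    have h : ∀ i, ((w * w').left i).toAdd
        = (w.left i).toAdd + (w'.left (w.right.symm i)).toAdd := fun _ => rfl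
    simp only [h, map_add, Finset.sum_add_distrib, ofAdd_add]
    congr 2
    exact Equiv.sum_comp w.right.symm
      (fun i => ZMod.castHom hp (ZMod p) ((w'.left i).toAdd))

/-- `W = G(e,p,n)`: the subgroup of `W̃` on which `∑ a_i ≡ 0 (mod p)`. -/
noncomputable def Wgrp (e p n : ℕ) (hp : p ∣ e) : Subgroup (Wt e n) :=
  (wsumHom e p n hp).ker

/-- `σ = t_1 ∈ W̃`. -/
def sigmaElt (e n : ℕ) [NeZero n] : Wt e n :=
  SemidirectProduct.inl (fun i => Multiplicative.ofAdd (if i = (0 : Fin n) then (1 : ZMod e) else 0))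

/-- membership in the coset `σ^q W`. -/
def inCoset (e p n : ℕ) [NeZero n] (hp : p ∣ e) (q : ℕ) (w : Wt e n) : Prop :=
  ∃ u ∈ Wgrp e p n hp, w = (sigmaElt e n) ^ q * u

/-- conjugacy under `W`. -/
def IsConjW (e p n : ℕ) (hp : p ∣ e) (w w' : Wt e n) : Prop :=
  ∃ u ∈ Wgrp e p n hp, u * w * u⁻¹ = w'

/-- The `e`-partition recording the conjugacy class of `w ∈ W̃`:
a `k`-cycle of length `l` (a cycle of the underlying permutation whose
accumulated `ZMod e`-color is `k`, fixed points counting as `1`-cycles)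
contributes a part `l` to the `k`-th component. -/
noncomputable def classOf (e n : ℕ) [NeZero e] (w : Wt e n) : ZMod e → Multiset ℕ := fun k =>
  ((w.right.cycleFactorsFinset.val.filter
      (fun c => (∑ i ∈ c.support, (w.left i).toAdd) = k)).map fun c => c.support.card)
    + Multiset.replicate
        ((Finset.univ.filter fun i : Fin n => w.right i = i ∧ (w.left i).toAdd = k).card) 1

/-! ### The standard class representative `w_α(b)` -/

/-- The list of (part, color) pairs of an `e`-partition. -/
noncomputable def partsList (e : ℕ) [NeZero e] (α : ZMod e → Multiset ℕ) : List (ℕ × ZMod e) :=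
  (Finset.univ : Finset (ZMod e)).toList.flatMap fun k => (α k).toList.map fun r => (r, k)

/-- the color datum of `w_α(b)`: each cycle carries its color at its first
point, except the first (exceptional) cycle, which carries `k - b` at its
first point and `b` at its last point. -/
noncomputable def aexc (e : ℕ) [NeZero e] (L : List (ℕ × ZMod e)) (b : ZMod e) :
    (Σ i : Fin L.length, Fin (L.get i).1) → ZMod e := fun x =>
  if (x.1 : ℕ) = 0 then
    (if (x.2 : ℕ) = 0 then (L.get x.1).2 - b else 0)
      + (if (x.2 : ℕ) = (L.get x.1).1 - 1 then b else 0)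
  else if (x.2 : ℕ) = 0 then (L.get x.1).2 else 0

/-- The standard representative `w_α(b) ∈ W̃` of the paper, 2.6: a product of
disjoint cycles matching `α`, of the form `t_{i_1}^k z` except for one
exceptional cycle `t_{i_1}^{k-b} t_{i_m}^{b} z`. -/
noncomputable def wrep (e n : ℕ) [NeZero e] (α : ZMod e → Multiset ℕ) (b : ZMod e) : Wt e n :=
  if hcard : Fintype.card (Σ i : Fin (partsList e α).length, Fin ((partsList e α).get i).1) = n then
    let φ := Fintype.equivFinOfCardEq hcard
    ⟨fun t => Multiplicative.ofAdd (aexc e (partsList e α) b (φ.symm t)),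
      φ.symm.trans ((Equiv.sigmaCongrRight fun _ => finRotate _).trans φ)⟩
  else 1

/-! ## The tensor space `V^{⊗n}` -/

/-- Basis index of `V = ⊕_k V_k`, `dim V_k = m k`. -/
abbrev BIdx (e : ℕ) [NeZero e] (m : ZMod e → ℕ) := Σ k : ZMod e, Fin (m k)

/-- Basis index of `V^{⊗n}`. -/
abbrev TIdx (e n : ℕ) [NeZero e] (m : ZMod e → ℕ) := Fin n → BIdx e m

/-- `ζ` raised to a `ZMod e` exponent. -/
noncomputable def zmpow (e : ℕ) [NeZero e] (ζ : ℂ) (c : ZMod e) : ℂ := ζ ^ c.val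

/-- the matrix of `w ∈ W̃` on `V^{⊗n}` (𝔖_n permutes the factors, and
`t_k` multiplies by `ζ^j` if the `k`-th factor lies in `V_j`). -/
noncomputable def rhoMat (e n : ℕ) [NeZero e] (ζ : ℂ) (m : ZMod e → ℕ) (w : Wt e n) :
    Matrix (TIdx e n m) (TIdx e n m) ℂ := fun b' b =>
  if b' = b ∘ ⇑w.right.symm then ∏ s, ζ ^ (((w.left s).toAdd.val) * (b' s).1.val) else 0

/-- The operator `D` (multiplication by `x_{i_1} ⋯ x_{i_n}`), with the
variables evaluated via `xv`. -/
noncomputable def Dmat (e n : ℕ) [NeZero e] (m : ZMod e → ℕ) (xv : BIdx e m → ℂ) :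
    Matrix (TIdx e n m) (TIdx e n m) ℂ :=
  Matrix.diagonal fun b => ∏ s, xv (b s)

/-- `τ` on the basis of `V`: `v_j^{(k)} ↦ v_j^{(k+d)}` (uses `m (k+d) = m k`). -/
def tauB (e : ℕ) [NeZero e] (d : ℕ) (m : ZMod e → ℕ) (hm : ∀ k, m (k + (d : ZMod e)) = m k) :
    BIdx e m → BIdx e m := fun b => ⟨b.1 + (d : ZMod e), Fin.cast (hm b.1).symm b.2⟩

/-- `g ↦ g^{⊗ n}`: the matrix of `g ∈ End V` acting diagonally on `V^{⊗n}`. -/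
noncomputable def tensorPow (e n : ℕ) [NeZero e] (m : ZMod e → ℕ)
    (g : Matrix (BIdx e m) (BIdx e m) ℂ) : Matrix (TIdx e n m) (TIdx e n m) ℂ :=
  Matrix.of fun b' b => ∏ s, g (b' s) (b s)

/-- the matrix of `τ` on `V`. -/
noncomputable def tauV (e : ℕ) [NeZero e] (d : ℕ) (m : ZMod e → ℕ)
    (hm : ∀ k, m (k + (d : ZMod e)) = m k) : Matrix (BIdx e m) (BIdx e m) ℂ :=
  fun b' b => if b' = tauB e d m hm b then 1 else 0

/-- the matrix of `τ` on `V^{⊗n}`. -/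
noncomputable def tauMat (e n : ℕ) [NeZero e] (d : ℕ) (m : ZMod e → ℕ)
    (hm : ∀ k, m (k + (d : ZMod e)) = m k) : Matrix (TIdx e n m) (TIdx e n m) ℂ :=
  tensorPow e n m (tauV e d m hm)

/-- a member of `G = GL_{m_0} × ⋯ × GL_{m_{e-1}}` (as an endomorphism of V,
invertibility stated separately). -/
def IsBlockDiag (e : ℕ) [NeZero e] (m : ZMod e → ℕ) (g : Matrix (BIdx e m) (BIdx e m) ℂ) : Prop :=
  ∀ b b' : BIdx e m, b.1 ≠ b'.1 → g b b' = 0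

/-- a block upper unitriangular matrix (product of root subgroups for the
positive roots of `G`). -/
def IsUpperUni (e : ℕ) [NeZero e] (m : ZMod e → ℕ) (g : Matrix (BIdx e m) (BIdx e m) ℂ) : Prop :=
  (∀ b, g b b = 1) ∧
    ∀ b b' : BIdx e m, b ≠ b' → ¬(b.1 = b'.1 ∧ b.2.val < b'.2.val) → g b b' = 0

/-! ## Symmetric functions (evaluated form) -/

/-- value of the variable `x_i^{(k)}` under the assignment `xv` (junk `0` out
of range). -/
noncomputable def xval (e : ℕ) [NeZero e] (m : ZMod e → ℕ) (xv : BIdx e m → ℂ)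
    (k : ZMod e) (i : ℕ) : ℂ :=
  if h : i < m k then xv ⟨k, ⟨i, h⟩⟩ else 0

/-- `h_j`: the order of the image of `j` in `ℤ/pℤ`. -/
noncomputable def hOrd (p j : ℕ) : ℕ := addOrderOf ((j : ZMod p))

/-- `j₁ d` where `j₁ = p / h_j`: the number of components of the variable
system `𝒳_j`. -/
noncomputable def Esys (p d j : ℕ) : ℕ := (p / hOrd p j) * d

/-- the variable `X_i^{(k)} = x_i^{(k)} x_i^{(k+jd)} ⋯ x_i^{(k+(h_j-1)jd)}`
of the system `𝒳_j`. -/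
noncomputable def Xvar (e : ℕ) [NeZero e] (p d : ℕ) (m : ZMod e → ℕ) (xv : BIdx e m → ℂ)
    (j k i : ℕ) : ℂ :=
  ∏ s ∈ Finset.range (hOrd p j), xval e m xv (((k + s * j * d : ℕ) : ZMod e)) i

/-- number of variables in the `k`-th component of any of the systems `𝒳_j`. -/
noncomputable def mmX (e : ℕ) [NeZero e] (m : ZMod e → ℕ) : ℕ → ℕ := fun k => m ((k : ℕ) : ZMod e)

/-- The variables of the system `𝒳_j`, as a doubly indexed family. -/
noncomputable def vvX (e : ℕ) [NeZero e] (p d : ℕ) (m : ZMod e → ℕ) (xv : BIdx e m → ℂ)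
    (j : ℕ) : ℕ → ℕ → ℂ := fun k i => Xvar e p d m xv j k i

/-- complete homogeneous symmetric polynomial `h_r` in `N` variables. -/
noncomputable def hcomp (N r : ℕ) (v : ℕ → ℂ) : ℂ :=
  ∑ c ∈ Finset.Nat.antidiagonalTuple N r, ∏ i : Fin N, v i ^ c i

/-- the parts of a partition in decreasing order (`0` beyond the length). -/
noncomputable def lamOf (μ : Multiset ℕ) (i : ℕ) : ℕ := ((μ.sort (· ≤ ·)).reverse).getD i 0

/-- Schur polynomial in `N` variables (Jacobi–Trudi). -/
noncomputable def schurFin (N : ℕ) (μ : Multiset ℕ) (v : ℕ → ℂ) : ℂ :=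
  Matrix.det (Matrix.of fun i j : Fin N =>
    if h : (0 : ℤ) ≤ (lamOf μ i + j : ℤ) - i then hcomp N ((lamOf μ i + j : ℤ) - i).toNat v
    else 0)

/-- monomial symmetric polynomial in `N` variables. -/
noncomputable def monoFin (N : ℕ) (μ : Multiset ℕ) (v : ℕ → ℂ) : ℂ :=
  ∑ c ∈ (Finset.Nat.antidiagonalTuple N μ.sum).filter
      (fun c => ((List.ofFn c : List ℕ) : Multiset ℕ).filter (fun x => 0 < x) = μ),
    ∏ i : Fin N, v i ^ c i

/-! ### generic families for a variable system with `E` components -/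

/-- `p_r^{(i)} = ∑_{k<E} u^{ik} p_r(x^{(k)})` (formula (2.2.2)/(2.4.2), with
`u` a primitive `E`-th root of unity), for the system of variables
`vv k i` (`k < E`, `i < mm k`); `p_0^{(i)} = 1`. -/
noncomputable def pGenSys (u : ℂ) (E : ℕ) (mm : ℕ → ℕ) (vv : ℕ → ℕ → ℂ) (i r : ℕ) : ℂ :=
  if r = 0 then 1 else ∑ k ∈ Finset.range E, u ^ (i * k) * ∑ s ∈ Finset.range (mm k), vv k s ^ r

/-- the power sum `p_γ` of an `E`-tuple of partitions (2.2.1). -/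
noncomputable def pAlphaSys (u : ℂ) (E : ℕ) (mm : ℕ → ℕ) (vv : ℕ → ℕ → ℂ)
    (γ : ℕ → Multiset ℕ) : ℂ :=
  ∏ k ∈ Finset.range E, ((γ k).map fun r => pGenSys u E mm vv k r).prod

/-- the Schur function `s_γ` of an `E`-tuple of partitions. -/
noncomputable def sAlphaSys (E : ℕ) (mm : ℕ → ℕ) (vv : ℕ → ℕ → ℂ) (γ : ℕ → Multiset ℕ) : ℂ :=
  ∏ k ∈ Finset.range E, schurFin (mm k) (γ k) (vv k)

/-- the monomial symmetric function `m_γ` of an `E`-tuple of partitions. -/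
noncomputable def mAlphaSys (E : ℕ) (mm : ℕ → ℕ) (vv : ℕ → ℕ → ℂ) (γ : ℕ → Multiset ℕ) : ℂ :=
  ∏ k ∈ Finset.range E, monoFin (mm k) (γ k) (vv k)

/-- the function `q_{r,±}^{(k)}(x;t)` of [S], (3.1.1). -/
noncomputable def qGenSys (t : ℂ) (E : ℕ) (mm : ℕ → ℕ) (vv : ℕ → ℕ → ℂ)
    (sgn : Bool) (k r : ℕ) : ℂ :=
  if r = 0 then 1 else
    let k' := if sgn then (k + 1) % E else (k + E - 1) % E
    ∑ i ∈ Finset.range (mm k),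
      vv k i ^ ((r : ℤ) + (mm k : ℤ) - 1 - (mm k' : ℤ)) *
        (∏ jj ∈ Finset.range (mm k'), (vv k i - t * vv k' jj)) /
        ∏ jj ∈ (Finset.range (mm k)).erase i, (vv k i - vv k jj)

/-- the function `q_{γ,±}(x;t)` of [S], (3.1.2). -/
noncomputable def qAlphaSys (t : ℂ) (E : ℕ) (mm : ℕ → ℕ) (vv : ℕ → ℕ → ℂ)
    (sgn : Bool) (γ : ℕ → Multiset ℕ) : ℂ :=
  ∏ k ∈ Finset.range E, ((γ k).map fun r => qGenSys t E mm vv sgn k r).prod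

/-- `z_β = ∏ i^{n_i} n_i!` for a partition `β = (1^{n_1} 2^{n_2} ⋯)`. -/
noncomputable def zPart (μ : Multiset ℕ) : ℂ :=
  ∏ i ∈ μ.toFinset, (i : ℂ) ^ (μ.count i) * (Nat.factorial (μ.count i) : ℂ)

/-- `z_γ(t) = z_γ ∏_{k,j} (1 - u^k t^{γ_j^{(k)}})⁻¹` for an `E`-tuple of
partitions `γ` (`u` the `E`-th root of unity), cf. (3.1.3). -/
noncomputable def zClassSys (u t : ℂ) (E : ℕ) (γ : ℕ → Multiset ℕ) : ℂ :=
  ((E : ℂ) ^ (∑ k ∈ Finset.range E, (γ k).card)) * (∏ k ∈ Finset.range E, zPart (γ k)) *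
    (∏ k ∈ Finset.range E, ((γ k).map fun r => (1 - u ^ k * t ^ r)).prod)⁻¹

/-! ### the `j`-th pieces attached to an e-partition -/

/-- the truncation `α{j} = (α^{(0)},…,α^{(j₁d-1)})` (used when `c_{α,p} ∣ j`). -/
noncomputable def braceF (e : ℕ) [NeZero e] (p d : ℕ) (j : ℕ) (α : ZMod e → Multiset ℕ) :
    ℕ → Multiset ℕ :=
  fun k => if k < Esys p d j then α ((k : ℕ) : ZMod e) else 0

/-- the `j₁d`-partition `α[j]` of `n/h` (condition (2.6.1)): component `k/h`
has parts `α_i^{(k)}/h`. -/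
noncomputable def bracketF (e : ℕ) [NeZero e] (p d : ℕ) (j : ℕ) (α : ZMod e → Multiset ℕ) :
    ℕ → Multiset ℕ :=
  fun k' => if k' < Esys p d j then (α (((hOrd p j * k' : ℕ) : ZMod e))).map (fun r => r / hOrd p j)
  else 0

/-- condition (2.6.1): `h_j` divides all parts `α_i^{(k)}`, and `h_j ∣ k`
whenever `α^{(k)} ≠ ∅`. -/
def Cond261 (e : ℕ) [NeZero e] (p j : ℕ) (α : ZMod e → Multiset ℕ) : Prop :=
  (∀ k, ∀ r ∈ α k, hOrd p j ∣ r) ∧ ∀ k : ZMod e, α k ≠ 0 → hOrd p j ∣ k.val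

/-- `s_{α{j}}(𝒳_j)`. -/
noncomputable def schurBrace (e : ℕ) [NeZero e] (p d : ℕ) (m : ZMod e → ℕ) (xv : BIdx e m → ℂ)
    (j : ℕ) (α : ZMod e → Multiset ℕ) : ℂ :=
  sAlphaSys (Esys p d j) (mmX e m) (vvX e p d m xv j) (braceF e p d j α)

/-- `p_{α[j]}(𝒳_j)` (2.6; the root of unity for the system `𝒳_j` is `ζ^h`). -/
noncomputable def pBracket (e : ℕ) [NeZero e] (p d : ℕ) (ζ : ℂ) (m : ZMod e → ℕ)
    (xv : BIdx e m → ℂ) (j : ℕ) (α : ZMod e → Multiset ℕ) : ℂ :=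
  pAlphaSys (ζ ^ hOrd p j) (Esys p d j) (mmX e m) (vvX e p d m xv j) (bracketF e p d j α)

/-- `l(α[j])`. -/
noncomputable def lenBracket (e : ℕ) [NeZero e] (p d : ℕ) (j : ℕ)
    (α : ZMod e → Multiset ℕ) : ℕ :=
  ∑ k ∈ Finset.range (Esys p d j), (bracketF e p d j α k).card

/-! ### Schur functions and power sums for `σ^q W` (2.10) -/

/-- the `j`-th component `s^j_{α,φ}` of the Schur function `𝐬_{α,φ}` for
`σ^q W` (2.10.1); the character `φ = φ_r` of `Γ_α = ⟨τ^c⟩ ≅ ℤ/(p/c)ℤ` is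
encoded by `r`, via `φ_r(τ^j) = ζ^{drj}` for `c ∣ j`. -/
noncomputable def sTuple (e : ℕ) [NeZero e] (p d q : ℕ) (ζ : ℂ) (m : ZMod e → ℕ)
    (xv : BIdx e m → ℂ) (α : ZMod e → Multiset ℕ) (r : ℕ) (j : ℕ) : ℂ :=
  if csize e d α ∣ j then
    ζ ^ (d * r * j) *
      ∑ i ∈ Finset.range (csize e d α),
        ζ ^ (q * i * d) * schurBrace e p d m xv j ((theta e d)^[i] α)
  else 0

/-- the `j`-th component `p^j_{β,b}` of the power sum `𝐩_{β,b}` for `σ^q W`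
(2.10.2). -/
noncomputable def pTuple (e : ℕ) [NeZero e] (p d : ℕ) (ζ : ℂ) (m : ZMod e → ℕ)
    (xv : BIdx e m → ℂ) (β : ZMod e → Multiset ℕ) (b : ZMod e) (j : ℕ) : ℂ :=
  if Cond261 e p j β then
    (hOrd p j : ℂ) ^ (lenBracket e p d j β) *
      zmpow e ζ (-(((Delta e β : ZMod e) + b) * ((j * d : ℕ) : ZMod e))) *
      pBracket e p d ζ m xv j β
  else 0

/-! ## The model for (extensions of) the irreducible characters of `W` -/

/-- trace of `f` on a subspace (junk `0` if not invariant). -/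
noncomputable def traceOn {V : Type*} [AddCommGroup V] [Module ℂ V]
    (S : Submodule ℂ V) (f : V →ₗ[ℂ] V) : ℂ :=
  if h : ∀ v ∈ S, f v ∈ S then LinearMap.trace ℂ S (f.restrict h) else 0

/-- the scalar by which the torus element `diag dv ∈ G` acts on a highest
weight vector of weight `α`. -/
noncomputable def weightOf (e : ℕ) [NeZero e] (m : ZMod e → ℕ) (α : ZMod e → Multiset ℕ)
    (dv : BIdx e m → ℂ) : ℂ :=
  ∏ b : BIdx e m, dv b ^ (lamOf (α b.1) b.2.val)

/-- the space of highest weight vectors of weight `α` in `V^{⊗n}`: the model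
for the irreducible `W̃`-module `Z_α` (1.3.1, 1.4). -/
noncomputable def hwSubmodule (e n : ℕ) [NeZero e] (m : ZMod e → ℕ)
    (α : ZMod e → Multiset ℕ) : Submodule ℂ (TIdx e n m → ℂ) :=
  (⨅ g ∈ {g | IsUpperUni e m g},
      Module.End.eigenspace (Matrix.mulVecLin (tensorPow e n m g)) 1) ⊓
    ⨅ dv : BIdx e m → ℂ,
      Module.End.eigenspace (Matrix.mulVecLin (tensorPow e n m (Matrix.diagonal dv)))
        (weightOf e m α dv)

/-- the model for the irreducible `W`-module `Z_{α,φ_r}`: the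
`φ_r(τ^c)`-eigenspace of `τ^c` on `Z_α`, where `c = c_{α,p}` and
`φ_r(τ^c) = ζ^{cdr}`. -/
noncomputable def ZSub (e n : ℕ) [NeZero e] (d : ℕ) (m : ZMod e → ℕ)
    (hm : ∀ k, m (k + (d : ZMod e)) = m k) (ζ : ℂ) (α : ZMod e → Multiset ℕ) (r : ℕ) :
    Submodule ℂ (TIdx e n m → ℂ) :=
  hwSubmodule e n m α ⊓
    Module.End.eigenspace (Matrix.mulVecLin ((tauMat e n d m hm) ^ (csize e d α)))
      (ζ ^ (csize e d α * d * r))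

/-- The model for the irreducible character `χ^{α,φ_r}` of `W` and for its
chosen extension `χ̃^{α,φ_r}` to `⟨σ^q⟩ ⋉ W`: the trace of `w` on the model
`Z_{α,φ_r} ⊆ V^{⊗n}`. -/
noncomputable def charExt (e n : ℕ) [NeZero e] (d : ℕ) (m : ZMod e → ℕ)
    (hm : ∀ k, m (k + (d : ZMod e)) = m k) (ζ : ℂ) (α : ZMod e → Multiset ℕ) (r : ℕ)
    (w : Wt e n) : ℂ :=
  traceOn (ZSub e n d m hm ζ α r) (Matrix.mulVecLin (rhoMat e n ζ m w))

/-! ## symbols, a-function, similarity; the reflection representation -/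

/-- the multiset of entries of the symbol `Λ(α) = α + Λ⁰` of type `(r,0)`. -/
noncomputable def entriesSym (e : ℕ) [NeZero e] (m : ZMod e → ℕ) (rsym : ℕ)
    (α : ZMod e → Multiset ℕ) : Multiset ℕ :=
  (Finset.univ : Finset (BIdx e m)).val.map fun b =>
    lamOf (α b.1) b.2.val + rsym * (m b.1 - 1 - b.2.val)

noncomputable def pairMinSum (M : Multiset ℕ) : ℕ :=
  (M.bind fun a => M.map fun b => min a b).sum

/-- the `a`-function (3.5.2) on symbols of type `(rsym, 0)`. -/
noncomputable def aVal (e : ℕ) [NeZero e] (m : ZMod e → ℕ) (rsym : ℕ)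
    (α : ZMod e → Multiset ℕ) : ℕ :=
  pairMinSum (entriesSym e m rsym α) - pairMinSum (entriesSym e m rsym (fun _ => 0))

/-- similarity of symbols: equality of entries with multiplicities. -/
def SimSym (e : ℕ) [NeZero e] (m : ZMod e → ℕ) (rsym : ℕ) (α β : ZMod e → Multiset ℕ) : Prop :=
  entriesSym e m rsym α = entriesSym e m rsym β

/-- the reflection representation `M = ℂ^n` of `W̃` (`w(e_i) = ζ^{a_i} e_{x(i)}`). -/
noncomputable def refMat (e n : ℕ) [NeZero e] (ζ : ℂ) (w : Wt e n) :
    Matrix (Fin n) (Fin n) ℂ :=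
  fun i' i => if i' = w.right i then zmpow e ζ (w.left i').toAdd else 0

/-- The functional `R_q(f)` of (4.2.1), for a function `f` on the coset `σ^q W`. -/
noncomputable def Rq (e p d n : ℕ) [NeZero e] [NeZero n] (hp : p ∣ e) (ζ t : ℂ) (q : ℕ)
    (f : Wt e n → ℂ) : ℂ :=
  (ζ ^ (q * d) * t ^ (d * n) - 1) * (∏ i ∈ Finset.Icc 1 (n - 1), (t ^ (e * i) - 1)) *
    (Nat.card (Wgrp e p n hp) : ℂ)⁻¹ *
    ∑ w ∈ Finset.univ.filter (fun w => inCoset e p n hp q w),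
      (refMat e n ζ w).det * f w / (t • (1 : Matrix (Fin n) (Fin n) ℂ) - refMat e n ζ w).det

/-- `N^*`: the number of reflections in `W`. -/
noncomputable def Nstar (e p n : ℕ) [NeZero e] (hp : p ∣ e) (ζ : ℂ) : ℕ :=
  Nat.card {w : Wt e n // w ∈ Wgrp e p n hp ∧ w ≠ 1 ∧ (refMat e n ζ w - 1).rank = 1}

end GreenII
namespace GreenII

/-! ### Helper lemmas for the proof -/

theorem zmpow_natCast (e : ℕ) [NeZero e] (ζ : ℂ) (hζ : ζ ^ e = 1) (N : ℕ) :
    zmpow e ζ (N : ZMod e) = ζ ^ N := by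
  unfold zmpow
  rw [ZMod.val_natCast]
  conv_rhs => rw [← Nat.mod_add_div N e, pow_add, pow_mul, hζ, one_pow, mul_one]

theorem zmpow_add (e : ℕ) [NeZero e] (ζ : ℂ) (hζ : ζ ^ e = 1) (x y : ZMod e) :
    zmpow e ζ (x + y) = zmpow e ζ x * zmpow e ζ y := by
  have h : x + y = ((x.val + y.val : ℕ) : ZMod e) := by simp
  rw [h, zmpow_natCast e ζ hζ, pow_add]
  rfl

theorem zmpow_sum (e : ℕ) [NeZero e] (ζ : ℂ) (hζ : ζ ^ e = 1) {ι : Type*} (s : Finset ι)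
    (g : ι → ZMod e) :
    zmpow e ζ (∑ i ∈ s, g i) = ∏ i ∈ s, zmpow e ζ (g i) := by
  induction s using Finset.induction_on with
  | empty => simp [zmpow]
  | insert i s hi ih => rw [Finset.sum_insert hi, Finset.prod_insert hi, zmpow_add e ζ hζ, ih]

theorem pow_val_mul_val (e : ℕ) [NeZero e] (ζ : ℂ) (hζ : ζ ^ e = 1) (x y : ZMod e) :
    ζ ^ (x.val * y.val) = zmpow e ζ (x * y) := by
  rw [← zmpow_natCast e ζ hζ]
  simp

theorem BIdx_ext {e : ℕ} [NeZero e] {m : ZMod e → ℕ} {b c : BIdx e m}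
    (h1 : b.1 = c.1) (h2 : b.2.val = c.2.val) : b = c := by
  obtain ⟨k, i⟩ := b
  obtain ⟨k', i'⟩ := c
  simp only at h1
  subst h1
  simp only at h2
  have : i = i' := Fin.ext h2
  rw [this]

theorem tauB_iter_fst (e : ℕ) [NeZero e] (d : ℕ) (m : ZMod e → ℕ)
    (hm : ∀ k, m (k + (d : ZMod e)) = m k) (j : ℕ) (b : BIdx e m) :
    ((tauB e d m hm)^[j] b).1 = b.1 + ((j * d : ℕ) : ZMod e) ∧
      ((tauB e d m hm)^[j] b).2.val = b.2.val := by
  induction j with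
  | zero => simp
  | succ j ih =>
    rw [Function.iterate_succ_apply']
    refine ⟨?_, ?_⟩
    · change ((tauB e d m hm)^[j] b).1 + (d : ZMod e) = _
      rw [ih.1]
      push_cast
      ring
    · change ((tauB e d m hm)^[j] b).2.val = _
      exact ih.2

theorem xv_eq_xval (e : ℕ) [NeZero e] (m : ZMod e → ℕ) (xv : BIdx e m → ℂ) (b : BIdx e m) :
    xv b = xval e m xv b.1 b.2.val := by
  unfold xval
  rw [dif_pos b.2.isLt]

theorem tauMat_apply (e n : ℕ) [NeZero e] (d : ℕ) (m : ZMod e → ℕ)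
    (hm : ∀ k, m (k + (d : ZMod e)) = m k) (b' b : TIdx e n m) :
    tauMat e n d m hm b' b = if b' = tauB e d m hm ∘ b then 1 else 0 := by
  unfold tauMat tensorPow tauV
  rw [Matrix.of_apply]
  split_ifs with h
  · apply Finset.prod_eq_one
    intro s _
    exact if_pos (congrFun h s)
  · have : ∃ s, b' s ≠ tauB e d m hm (b s) := by
      by_contra! hc
      exact h (funext hc)
    obtain ⟨s, hs⟩ := this
    exact Finset.prod_eq_zero (Finset.mem_univ s) (if_neg hs)

theorem tauMat_pow_apply (e n : ℕ) [NeZero e] (d : ℕ) (m : ZMod e → ℕ)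
    (hm : ∀ k, m (k + (d : ZMod e)) = m k) (j : ℕ) (b' b : TIdx e n m) :
    (tauMat e n d m hm ^ j) b' b = if b' = (tauB e d m hm)^[j] ∘ b then 1 else 0 := by
  induction j generalizing b' b with
  | zero =>
    rw [pow_zero, Matrix.one_apply]
    simp
  | succ j ih =>
    rw [pow_succ, Matrix.mul_apply]
    simp_rw [ih, tauMat_apply]
    rw [Finset.sum_eq_single (tauB e d m hm ∘ b)]
    · rw [if_pos rfl, mul_one, Function.iterate_succ]
      rfl
    · intro c _ hc
      rw [if_neg hc, mul_zero]
    · simp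

theorem trace_step1 (e n : ℕ) [NeZero e] (d : ℕ) (ζ : ℂ) (m : ZMod e → ℕ)
    (hm : ∀ k, m (k + (d : ZMod e)) = m k) (xv : BIdx e m → ℂ) (j : ℕ) (w : Wt e n) :
    Matrix.trace (Dmat e n m xv * (tauMat e n d m hm) ^ j * rhoMat e n ζ m w) =
      ∑ b : TIdx e n m, if b = (tauB e d m hm)^[j] ∘ b ∘ ⇑w.right.symm then
        (∏ s, xv (b s)) * ∏ s, ζ ^ (((w.left s).toAdd.val) * (b (w.right.symm s)).1.val) else 0 := by
  unfold Matrix.trace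
  refine Finset.sum_congr rfl fun b _ => ?_
  rw [Matrix.diag_apply, Matrix.mul_assoc, Dmat, Matrix.diagonal_mul, Matrix.mul_apply]
  simp_rw [tauMat_pow_apply]
  rw [Finset.sum_eq_single (b ∘ ⇑w.right.symm)]
  · unfold rhoMat
    rw [if_pos rfl]
    split_ifs with h
    · rw [one_mul]; rfl
    · simp
  · intro c _ hc
    unfold rhoMat
    rw [if_neg hc, mul_zero]
  · simp

/-- solutions of the cyclic equation are determined by the first entry -/
theorem cyc_iff (n : ℕ) [NeZero n] {B : Type*} (T : B → B) (b : Fin n → B) :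
    b = T ∘ b ∘ ⇑(finRotate n).symm ↔
      (∀ s : Fin n, b s = T^[s.val] (b 0)) ∧ T^[n] (b 0) = b 0 := by
  have h0 : b = T ∘ b ∘ ⇑(finRotate n).symm ↔ ∀ s, b (finRotate n s) = T (b s) := by
    constructor
    · intro h s
      have := congrFun h (finRotate n s)
      simpa using this
    · intro h
      funext s
      have := h ((finRotate n).symm s)
      simpa using this
  rw [h0]
  obtain ⟨N, rfl⟩ : ∃ N, n = N + 1 := Nat.exists_eq_succ_of_ne_zero (NeZero.ne n)
  have z0 : (0 : Fin (N + 1)) = ⟨0, Nat.succ_pos N⟩ := rfl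
  constructor
  · intro h
    have key : ∀ (s : ℕ) (hs : s < N + 1), b ⟨s, hs⟩ = T^[s] (b ⟨0, Nat.succ_pos N⟩) := by
      intro s
      induction s with
      | zero => intro hs; rfl
      | succ s ih =>
        intro hs
        have := h ⟨s, by omega⟩
        rw [finRotate_of_lt (by omega), ih] at this
        rw [this, Function.iterate_succ_apply']
    refine ⟨fun s => key s.val s.isLt, ?_⟩
    have := h ⟨N, by omega⟩
    rw [finRotate_last', key] at this
    rw [Function.iterate_succ_apply', z0, ← key N (by omega)]
    exact this.symm
  · rintro ⟨h1, h2⟩ s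
    obtain ⟨s, hs⟩ := s
    rcases Nat.lt_or_ge s N with hlt | hge
    · rw [finRotate_of_lt hlt, h1, h1 ⟨s, hs⟩, ← Function.iterate_succ_apply' T]
    · obtain rfl : s = N := by omega
      rw [finRotate_last', h1 ⟨s, hs⟩, ← Function.iterate_succ_apply' T]
      exact h2.symm

theorem sum_cyc (n : ℕ) [NeZero n] {B : Type*} [Fintype B] (T : B → B) (F : (Fin n → B) → ℂ) :
    (∑ b : Fin n → B, if b = T ∘ b ∘ ⇑(finRotate n).symm then F b else 0) =
      ∑ b₀ : B, if T^[n] b₀ = b₀ then F (fun s => T^[s.val] b₀) else 0 := by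
  rw [← Finset.sum_filter, ← Finset.sum_filter]
  refine Finset.sum_bij' (fun b _ => b 0) (fun b₀ _ => fun s => T^[s.val] b₀) ?_ ?_ ?_ ?_ ?_
  · intro b hb
    rw [Finset.mem_filter, cyc_iff] at hb
    simpa using hb.2.2
  · intro b₀ hb
    rw [Finset.mem_filter] at hb
    rw [Finset.mem_filter, cyc_iff]
    refine ⟨Finset.mem_univ _, ?_, ?_⟩
    · intro s; simp
    · simpa using hb.2
  · intro b hb
    rw [Finset.mem_filter, cyc_iff] at hb
    funext s
    exact (hb.2.1 s).symm
  · intro b₀ hb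
    simp
  · intro b hb
    rw [Finset.mem_filter, cyc_iff] at hb
    congr 1
    funext s
    exact hb.2.1 s

theorem coeff_eq (e d n : ℕ) [NeZero e] [NeZero n] (ζ : ℂ) (hζ : ζ ^ e = 1)
    (j : ℕ) (hn : ((n * (j * d) : ℕ) : ZMod e) = 0)
    (a b : ZMod e) (f : ℕ) (hab : a + b = (f : ZMod e)) (k : ZMod e) (c : Fin n → ZMod e)
    (hc : ∀ s, c s = k + ((s.val * (j * d) : ℕ) : ZMod e) - ((j * d : ℕ) : ZMod e)) :
    ∏ s : Fin n, ζ ^ (((if s = (0 : Fin n) then a else 0) +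
        (if (s : ℕ) = n - 1 then b else 0)).val * (c s).val) =
      zmpow e ζ (-(((f : ZMod e) + b) * ((j * d : ℕ) : ZMod e))) * ζ ^ (f * k.val) := by
  have hk : ζ ^ (f * k.val) = zmpow e ζ ((f : ZMod e) * k) := by
    rw [← zmpow_natCast e ζ hζ]; simp
  rw [hk, ← zmpow_add e ζ hζ]
  simp_rw [pow_val_mul_val e ζ hζ]
  rw [← zmpow_sum e ζ hζ]
  congr 1
  have hn1 : n - 1 < n := Nat.sub_lt (Nat.pos_of_ne_zero (NeZero.ne n)) one_pos
  have hlast : ∀ s : Fin n, ((s : ℕ) = n - 1) = (s = ⟨n - 1, hn1⟩) := by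
    intro s; simp [Fin.ext_iff]
  simp_rw [hlast, add_mul, ite_mul, zero_mul]
  rw [Finset.sum_add_distrib]
  simp only [Finset.sum_ite_eq', Finset.mem_univ, if_true, hc]
  have h2 : (((n - 1) * (j * d) : ℕ) : ZMod e) = - ((j * d : ℕ) : ZMod e) := by
    rw [eq_neg_iff_add_eq_zero, ← hn]
    obtain ⟨N, rfl⟩ : ∃ N, n = N + 1 := Nat.exists_eq_succ_of_ne_zero (NeZero.ne n)
    rw [Nat.add_sub_cancel]
    push_cast
    ring
  rw [h2, ← hab]
  simp only [Fin.coe_ofNat_eq_mod, Nat.zero_mod, zero_mul, Nat.cast_zero]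
  ring

theorem prod_range_periodic (h r : ℕ) (F : ℕ → ℂ) (hF : ∀ s, F (s + h) = F s) :
    ∏ s ∈ Finset.range (h * r), F s = (∏ s ∈ Finset.range h, F s) ^ r := by
  have hF' : ∀ t s, F (h * t + s) = F s := by
    intro t
    induction t with
    | zero => intro s; simp
    | succ t ih =>
      intro s
      rw [← ih s, ← hF (h * t + s)]
      congr 1
      ring
  induction r with
  | zero => simp
  | succ r ih =>
    rw [Nat.mul_succ, Finset.prod_range_add, ih, pow_succ]
    simp_rw [hF']

theorem sum_range_mul_split (E h : ℕ) (F : ℕ → ℂ) :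
    ∑ k ∈ Finset.range (E * h), F k =
      ∑ q ∈ Finset.range E, ∑ t ∈ Finset.range h, F (E * t + q) := by
  induction h with
  | zero => simp
  | succ h ih =>
    rw [Nat.mul_succ, Finset.sum_range_add, ih, ← Finset.sum_add_distrib]
    simp_rw [Finset.sum_range_succ]

theorem sum_zmod (e : ℕ) [NeZero e] (F : ZMod e → ℂ) :
    ∑ k : ZMod e, F k = ∑ k ∈ Finset.range e, F ((k : ℕ) : ZMod e) := by
  symm
  refine Finset.sum_bij' (fun k _ => ((k : ℕ) : ZMod e)) (fun k _ => k.val) ?_ ?_ ?_ ?_ ?_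
  · simp
  · intro k _; simpa using ZMod.val_lt k
  · intro k hk
    exact ZMod.val_cast_of_lt (by simpa using hk)
  · intro k _; simp
  · simp

theorem sum_root (h f : ℕ) (hpos : 0 < h) (u : ℂ) (hu : IsPrimitiveRoot u h) :
    ∑ t ∈ Finset.range h, (u ^ f) ^ t = if h ∣ f then (h : ℂ) else 0 := by
  split_ifs with hf
  · rw [(hu.pow_eq_one_iff_dvd f).2 hf]; simp
  · have h1 : u ^ f ≠ 1 := fun hc => hf ((hu.pow_eq_one_iff_dvd f).1 hc)
    rw [geom_sum_eq h1, ← pow_mul, mul_comm f h, pow_mul, hu.pow_eq_one]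
    simp

theorem periodic_sum (e E h f : ℕ) [NeZero e] (ζ : ℂ) (hζ : IsPrimitiveRoot ζ e)
    (he : e = E * h) (G : ZMod e → ℂ) (hG : ∀ k, G (k + (E : ZMod e)) = G k) :
    ∑ k : ZMod e, ζ ^ (f * k.val) * G k =
      (if h ∣ f then (h : ℂ) else 0) *
        ∑ k ∈ Finset.range E, ζ ^ (f * k) * G ((k : ℕ) : ZMod e) := by
  have e0 : 0 < e := Nat.pos_of_ne_zero (NeZero.ne e)
  have hpos : 0 < h := Nat.pos_of_ne_zero (by rintro rfl; simp at he; omega)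
  have hu : IsPrimitiveRoot (ζ ^ E) h := hζ.pow e0 he
  have hG' : ∀ (t : ℕ) (k : ZMod e), G (k + ((E * t : ℕ) : ZMod e)) = G k := by
    intro t
    induction t with
    | zero => intro k; simp
    | succ t ih =>
      intro k
      rw [← ih k, ← hG (k + ((E * t : ℕ) : ZMod e))]
      congr 1
      push_cast
      ring
  have h1 : ∀ k : ZMod e, ζ ^ (f * k.val) * G k = zmpow e ζ ((f : ZMod e) * k) * G k := by
    intro k
    rw [← zmpow_natCast e ζ hζ.pow_eq_one]; simp
  simp_rw [h1]
  rw [sum_zmod]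
  have h2 : ∀ k : ℕ, zmpow e ζ ((f : ZMod e) * (k : ZMod e)) = ζ ^ (f * k) := by
    intro k
    rw [← zmpow_natCast e ζ hζ.pow_eq_one]; simp
  simp_rw [h2]
  have h3 : Finset.range e = Finset.range (E * h) := by rw [← he]
  rw [h3, sum_range_mul_split, Finset.mul_sum]
  refine Finset.sum_congr rfl fun q _ => ?_
  rw [← sum_root h f hpos _ hu, Finset.sum_mul]
  refine Finset.sum_congr rfl fun t _ => ?_
  have h4 : (((E * t + q : ℕ)) : ZMod e) = (q : ZMod e) + ((E * t : ℕ) : ZMod e) := by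
    push_cast; ring
  rw [h4, hG', ← mul_assoc]
  congr 1
  rw [← pow_mul, ← pow_mul, ← pow_add]
  congr 1
  ring

theorem hOrd_dvd_iff (e p d : ℕ) (he : e = p * d) (hd0 : 0 < d) (j n : ℕ) :
    hOrd p j ∣ n ↔ ((n * (j * d) : ℕ) : ZMod e) = 0 := by
  unfold hOrd
  rw [addOrderOf_dvd_iff_nsmul_eq_zero, nsmul_eq_mul, ← Nat.cast_mul,
    ZMod.natCast_eq_zero_iff, ZMod.natCast_eq_zero_iff, he, ← mul_assoc,
    Nat.mul_dvd_mul_iff_right hd0]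

/-- the sum of powers of the products over a full `τ^j`-orbit -/
noncomputable def Gfun (e : ℕ) [NeZero e] (p d : ℕ) (m : ZMod e → ℕ) (xv : BIdx e m → ℂ)
    (j r : ℕ) (k : ZMod e) : ℂ :=
  ∑ i ∈ Finset.range (m k), (∏ s ∈ Finset.range (hOrd p j),
    xval e m xv (k + ((s * j * d : ℕ) : ZMod e)) i) ^ r

theorem m_periodic (e : ℕ) [NeZero e] (d : ℕ) (m : ZMod e → ℕ)
    (hm : ∀ k, m (k + (d : ZMod e)) = m k) (j : ℕ) (k : ZMod e) :
    m (k + ((j * d : ℕ) : ZMod e)) = m k := by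
  induction j with
  | zero => simp
  | succ j ih =>
    rw [← ih, ← hm (k + ((j * d : ℕ) : ZMod e))]
    congr 1
    push_cast
    ring

theorem Gfun_periodic (e : ℕ) [NeZero e] (p d : ℕ) (m : ZMod e → ℕ)
    (hm : ∀ k, m (k + (d : ZMod e)) = m k) (xv : BIdx e m → ℂ) (j r : ℕ)
    (hh : ((hOrd p j * (j * d) : ℕ) : ZMod e) = 0) (t : ℕ) (k : ZMod e) :
    Gfun e p d m xv j r (k + ((t * (j * d) : ℕ) : ZMod e)) = Gfun e p d m xv j r k := by
  have step : ∀ k : ZMod e,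
      Gfun e p d m xv j r (k + ((j * d : ℕ) : ZMod e)) = Gfun e p d m xv j r k := by
    intro k
    unfold Gfun
    rw [m_periodic e d m hm j k]
    refine Finset.sum_congr rfl fun i _ => ?_
    congr 1
    have h1 : ∀ s : ℕ, k + ((j * d : ℕ) : ZMod e) + ((s * j * d : ℕ) : ZMod e) =
        k + (((s + 1) * j * d : ℕ) : ZMod e) := by
      intro s; push_cast; ring
    simp_rw [h1]
    have h2 := Finset.prod_range_succ
      (fun s => xval e m xv (k + ((s * j * d : ℕ) : ZMod e)) i) (hOrd p j)
    have h3 := Finset.prod_range_succ'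
      (fun s => xval e m xv (k + ((s * j * d : ℕ) : ZMod e)) i) (hOrd p j)
    by_cases h0 : hOrd p j = 0
    · simp [h0]
    obtain ⟨H, hH⟩ := Nat.exists_eq_succ_of_ne_zero h0
    rw [hH] at hh ⊢
    rw [Finset.prod_range_succ, Finset.prod_range_succ']
    congr 2
    rw [mul_assoc, hh]
    simp
  induction t with
  | zero => simp
  | succ t ih =>
    rw [← ih, ← step (k + ((t * (j * d) : ℕ) : ZMod e))]
    congr 1
    push_cast
    ring

theorem Esys_facts (e p d : ℕ) (hp0 : 0 < p) (he : e = p * d) (j : ℕ) (hj : j < p) :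
    e = Esys p d j * hOrd p j ∧
      ∃ t : ℕ, ((Esys p d j : ℕ) : ZMod e) = ((t * (j * d) : ℕ) : ZMod e) := by
  have hh : hOrd p j = p / p.gcd j := ZMod.addOrderOf_coe j hp0.ne'
  have hg : p.gcd j ∣ p := Nat.gcd_dvd_left p j
  have hj1 : p / hOrd p j = p.gcd j := by
    rw [hh, Nat.div_div_self hg hp0.ne']
  unfold Esys
  rw [hj1]
  refine ⟨?_, ?_⟩
  · rw [hh, he]
    conv_lhs => rw [← Nat.mul_div_cancel' hg]
    ring
  · rcases Nat.eq_zero_or_pos j with rfl | hjp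
    · refine ⟨0, ?_⟩
      rw [Nat.gcd_zero_right, ← he]
      simp
    · have hlt : j.gcd p < p := lt_of_le_of_lt (Nat.gcd_le_left p hjp) hj
      obtain ⟨t, -, ht⟩ := Nat.exists_mul_mod_eq_gcd hlt
      refine ⟨t, ?_⟩
      rw [ZMod.natCast_eq_natCast_iff, he, ← mul_assoc, mul_comm t j, Nat.gcd_comm p j]
      apply Nat.ModEq.mul_right'
      rw [← ht]
      exact Nat.mod_modEq _ _

/-- Lemma 2.5.  Let `w ∈ W̃` be an `f`-cycle of length `n`
of the form `w = t_1^a t_n^b z`, `z = (1,2,…,n)`, `a + b ≡ f`.  Then for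
`0 ≤ j < p`,
`Tr(Dτ^j w, V^{⊗n}) = h ζ^{-(f+b)jd} p^{(f)}_{n/h}(𝒳_j)` if `h ∣ n` and
`h ∣ f` (`h = h_j`), and `= 0` otherwise. -/
theorem statement1 (e p d n : ℕ) [NeZero e] [NeZero n] (hp : p ∣ e) (hd : d = e / p)
    (ζ : ℂ) (hζ : IsPrimitiveRoot ζ e)
    (m : ZMod e → ℕ) (hmn : ∀ k, n ≤ m k) (hm : ∀ k, m (k + (d : ZMod e)) = m k)
    (xv : BIdx e m → ℂ)
    (a b : ZMod e) (f : ℕ) (hab : a + b = (f : ZMod e))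
    (j : ℕ) (hj : j < p)
    (w : Wt e n)
    (hw : w = ⟨fun i => Multiplicative.ofAdd
        ((if i = (0 : Fin n) then a else 0) + (if (i : ℕ) = n - 1 then b else 0)),
        finRotate n⟩) :
    Matrix.trace (Dmat e n m xv * (tauMat e n d m hm) ^ j * rhoMat e n ζ m w) =
      if hOrd p j ∣ n ∧ hOrd p j ∣ f then
        (hOrd p j : ℂ) * zmpow e ζ (-(((f : ZMod e) + b) * ((j * d : ℕ) : ZMod e))) *
          pGenSys ζ (Esys p d j) (mmX e m) (vvX e p d m xv j) f (n / hOrd p j)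
      else 0 := by
  have e0 : 0 < e := Nat.pos_of_ne_zero (NeZero.ne e)
  have n0 : 0 < n := Nat.pos_of_ne_zero (NeZero.ne n)
  have hp0 : 0 < p := by omega
  have he : e = p * d := by rw [hd, Nat.mul_div_cancel' hp]
  have hd0 : 0 < d := Nat.pos_of_ne_zero (by rintro h; rw [h] at he; simp at he; omega)
  have hζ1 : ζ ^ e = 1 := hζ.pow_eq_one
  rw [trace_step1]
  subst hw
  simp only [toAdd_ofAdd]
  have hcy := sum_cyc n ((tauB e d m hm)^[j]) (fun B => (∏ s, xv (B s)) *
    ∏ s : Fin n, ζ ^ (((if s = (0 : Fin n) then a else 0) +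
        (if (s : ℕ) = n - 1 then b else 0)).val * (B ((finRotate n).symm s)).1.val))
  refine Eq.trans (Eq.trans ?_ hcy) ?_
  · refine Finset.sum_congr rfl fun B _ => ?_
    congr
  clear hcy
  have hiter : ∀ (s : ℕ) (b₀ : BIdx e m),
      (((tauB e d m hm)^[j])^[s] b₀).1 = b₀.1 + ((s * (j * d) : ℕ) : ZMod e) ∧
      (((tauB e d m hm)^[j])^[s] b₀).2.val = b₀.2.val := by
    intro s b₀
    rw [← Function.iterate_mul]
    have := tauB_iter_fst e d m hm (j * s) b₀
    refine ⟨?_, this.2⟩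
    rw [this.1]
    push_cast
    ring
  have hfix : ∀ b₀ : BIdx e m, (((tauB e d m hm)^[j])^[n] b₀ = b₀) ↔ hOrd p j ∣ n := by
    intro b₀
    rw [hOrd_dvd_iff e p d he hd0]
    constructor
    · intro h
      have h1 := (hiter n b₀).1
      rw [h] at h1
      exact left_eq_add.mp h1
    · intro h
      apply BIdx_ext
      · rw [(hiter n b₀).1, h, add_zero]
      · exact (hiter n b₀).2
  simp_rw [hfix]
  by_cases hn : hOrd p j ∣ n
  swap
  · rw [if_neg (fun h => hn h.1)]
    simp [hn]
  simp only [hn, if_true, true_and]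
  have hn' := (hOrd_dvd_iff e p d he hd0 j n).1 hn
  have hterm : ∀ b₀ : BIdx e m, (∏ s : Fin n, xv (((tauB e d m hm)^[j])^[s.val] b₀)) *
      ∏ s : Fin n, ζ ^ (((if s = (0 : Fin n) then a else 0) +
        (if (s : ℕ) = n - 1 then b else 0)).val *
          (((tauB e d m hm)^[j])^[((finRotate n).symm s).val] b₀).1.val) =
      zmpow e ζ (-(((f : ZMod e) + b) * ((j * d : ℕ) : ZMod e))) * (ζ ^ (f * b₀.1.val) *
        (∏ s ∈ Finset.range (hOrd p j),
          xval e m xv (b₀.1 + ((s * j * d : ℕ) : ZMod e)) b₀.2.val) ^ (n / hOrd p j)) := by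
    intro b₀
    rw [coeff_eq e d n ζ hζ1 j hn' a b f hab b₀.1
      (fun s => (((tauB e d m hm)^[j])^[((finRotate n).symm s).val] b₀).1)]
    · have h1 : (∏ s : Fin n, xv (((tauB e d m hm)^[j])^[s.val] b₀)) =
          ∏ s ∈ Finset.range n, xval e m xv (b₀.1 + ((s * j * d : ℕ) : ZMod e)) b₀.2.val := by
        rw [Finset.prod_range]
        refine Finset.prod_congr rfl fun s _ => ?_
        rw [xv_eq_xval e m xv, (hiter s b₀).2, (hiter s b₀).1, mul_assoc]
      rw [h1]
      conv_lhs => rw [← Nat.mul_div_cancel' hn]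
      rw [prod_range_periodic]
      · ring
      · intro s
        have h2 := (hOrd_dvd_iff e p d he hd0 j (hOrd p j)).1 dvd_rfl
        have h3 : (((s + hOrd p j) * j * d : ℕ) : ZMod e) = ((s * j * d : ℕ) : ZMod e) := by
          have : (s + hOrd p j) * j * d = s * j * d + hOrd p j * (j * d) := by ring
          rw [this, Nat.cast_add, h2, add_zero]
        rw [h3]
    · intro s
      have hcyc := (cyc_iff n ((tauB e d m hm)^[j])
        (fun s : Fin n => ((tauB e d m hm)^[j])^[s.val] b₀)).2
        ⟨fun s => by simp, by simpa using (hfix b₀).2 hn⟩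
      have h1 := congrArg Sigma.fst (congrFun hcyc s)
      simp only [Function.comp_apply] at h1
      rw [(tauB_iter_fst e d m hm j _).1, (hiter s.val b₀).1] at h1
      rw [h1, add_sub_cancel_right]
  simp_rw [hterm]
  rw [← Finset.mul_sum, Fintype.sum_sigma]
  have hsum : ∀ k : ZMod e, (∑ i : Fin (m k), ζ ^ (f * k.val) *
        (∏ s ∈ Finset.range (hOrd p j),
          xval e m xv (k + ((s * j * d : ℕ) : ZMod e)) i.val) ^ (n / hOrd p j)) =
      ζ ^ (f * k.val) * Gfun e p d m xv j (n / hOrd p j) k := by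
    intro k
    unfold Gfun
    rw [Finset.sum_range, Finset.mul_sum]
  simp_rw [hsum]
  obtain ⟨hE, t, ht⟩ := Esys_facts e p d hp0 he j hj
  rw [periodic_sum e (Esys p d j) (hOrd p j) f ζ hζ hE]
  · have hr : n / hOrd p j ≠ 0 := by
      intro h0
      have := Nat.mul_div_cancel' hn
      rw [h0] at this
      omega
    have hpg : pGenSys ζ (Esys p d j) (mmX e m) (vvX e p d m xv j) f (n / hOrd p j) =
        ∑ k ∈ Finset.range (Esys p d j), ζ ^ (f * k) *
          Gfun e p d m xv j (n / hOrd p j) ((k : ℕ) : ZMod e) := by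
      unfold pGenSys Gfun mmX vvX Xvar
      rw [if_neg hr]
      simp_rw [Nat.cast_add]
    rw [hpg]
    split_ifs
    · ring
    · simp
  · intro k
    rw [ht]
    exact Gfun_periodic e p d m hm xv j _ ((hOrd_dvd_iff e p d he hd0 j (hOrd p j)).1 dvd_rfl) t k

end GreenII
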